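/- arXiv:0801.0174 — 2 statements merged into one kernel-verified Lean document; each statement's English description precedes it below -/
import Mathlib

section
/- Let H be a finite-dimensional Hopf algebra over a field F. The set of left integrals on H — that is, of linear functionals λ : H → F such that, identifying H ⊗_F F with H, ((id_H ⊗ λ) ∘ Δ)(h) = λ(h) • 1 for all h ∈ H — is an F-linear subspace of the dual H^∨ = Hom_F(H, F) of dimension exactly 1. -/
/-!
The dual `H^∨` is a right Hopf module over `H`: the action is `(f · h)(x) = f(x S(h))`, and the
coaction corresponds to `f ↦ (x ↦ x₍₁₎ f(x₍₂₎))` under `H^∨ ⊗ H ≃ End H`. Its coinvariants are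
precisely the left integrals. A Hopf module `M` is freely generated by its coinvariants, because
`m ↦ m₍₀₎ · S(m₍₁₎)` projects onto them; applied to `H^∨` this gives `∫ ⊗ H ≃ H^∨`, and comparing
ranks leaves rank one for the space `∫` of left integrals.
-/

section HopfModules

open Coalgebra HopfAlgebra WithConv TensorProduct
open Algebra.TensorProduct (includeLeft includeRight)

/-- A right action of the `R`-algebra `A` on the `R`-module `N`, as a bundled bilinear map rather
than a `Module Aᵐᵒᵖ N` instance, so that `N ⊗ P` can carry the action of `A ⊗ B`. -/
structure RightAction (R A N : Type*) [CommSemiring R] [Semiring A] [Algebra R A]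
    [AddCommMonoid N] [Module R N] where
  act : N →ₗ[R] A →ₗ[R] N
  act_one (n : N) : act n 1 = n
  act_mul (n : N) (a b : A) : act n (a * b) = act (act n a) b

/-- A right coaction of the `R`-coalgebra `C` on the `R`-module `M`. -/
structure RightCoaction (R C M : Type*) [CommSemiring R] [AddCommMonoid C] [Module R C]
    [Coalgebra R C] [AddCommMonoid M] [Module R M] where
  coact : M →ₗ[R] M ⊗[R] C
  coassoc (m : M) : TensorProduct.assoc R M C C (coact.rTensor C (coact m)) =
    comul.lTensor M (coact m)
  lTensor_counit_coact (m : M) : counit.lTensor M (coact m) = m ⊗ₜ[R] (1 : R)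

namespace RightAction

variable {R A B N P : Type*} [CommSemiring R] [Semiring A] [Algebra R A] [Semiring B] [Algebra R B]
  [AddCommMonoid N] [Module R N] [AddCommMonoid P] [Module R P]

/-- The right regular action of an algebra on itself. -/
@[simps]
def regular (R A : Type*) [CommSemiring R] [Semiring A] [Algebra R A] : RightAction R A A where
  act := LinearMap.mul R A
  act_one := mul_one
  act_mul n a b := (mul_assoc n a b).symm

/-- The componentwise action of `A ⊗ B` on `N ⊗ P`. -/
@[simps]
def tensor (α : RightAction R A N) (β : RightAction R B P) :
    RightAction R (A ⊗[R] B) (N ⊗[R] P) where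
  act := TensorProduct.map₂ α.act β.act
  act_one t := by
    induction t with
    | zero => simp
    | tmul n p => simp [Algebra.TensorProduct.one_def, α.act_one, β.act_one]
    | add s t hs ht => rw [map_add, LinearMap.add_apply, hs, ht]
  act_mul t u v := by
    induction t with
    | zero => simp
    | add s t hs ht => simp only [map_add, LinearMap.add_apply, hs, ht]
    | tmul n p =>
      induction u with
      | zero => simp
      | add u w hu hw => simp only [add_mul, map_add, LinearMap.add_apply, hu, hw]
      | tmul a b =>
        induction v with
        | zero => simp
        | add v w hv hw => simp only [mul_add, map_add, hv, hw]
        | tmul c d => simp [α.act_mul, β.act_mul]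

end RightAction

namespace RightCoaction

variable {R C A B M N P : Type*} [CommSemiring R] [AddCommMonoid C] [Module R C] [Coalgebra R C]
  [Semiring A] [Algebra R A] [Semiring B] [Algebra R B] [AddCommMonoid M] [Module R M]
  [AddCommMonoid N] [Module R N] [AddCommMonoid P] [Module R P]
  (ρ : RightCoaction R C M) (α : RightAction R A N)

/-- The convolution `m ↦ g m₍₀₎ · φ m₍₁₎` of a linear map `g : M → N` out of a comodule with a
linear map `φ : C → A` into an algebra acting on `N`. -/
def conv (g : M →ₗ[R] N) (φ : WithConv (C →ₗ[R] A)) : M →ₗ[R] N :=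
  TensorProduct.lift α.act ∘ₗ TensorProduct.map g φ.ofConv ∘ₗ ρ.coact

lemma conv_one (g : M →ₗ[R] N) : ρ.conv α g 1 = g := by
  have slice_counit : TensorProduct.lift α.act ∘ₗ
      TensorProduct.map g (1 : WithConv (C →ₗ[R] A)).ofConv =
      (TensorProduct.rid R N).toLinearMap ∘ₗ g.rTensor R ∘ₗ counit.lTensor M := by
    ext n c
    simp [LinearMap.convOne_def, Algebra.algebraMap_eq_smul_one, α.act_one]
  ext m
  calc ρ.conv α g 1 m
    _ = TensorProduct.rid R N (g.rTensor R (counit.lTensor M (ρ.coact m))) :=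
      LinearMap.congr_fun slice_counit (ρ.coact m)
    _ = g m := by simp only [ρ.lTensor_counit_coact, LinearMap.rTensor_tmul, TensorProduct.rid_tmul,
        one_smul]

lemma conv_mul (g : M →ₗ[R] N) (φ ψ : WithConv (C →ₗ[R] A)) :
    ρ.conv α g (φ * ψ) = ρ.conv α (ρ.conv α g φ) ψ := by
  have act_assoc : TensorProduct.lift α.act ∘ₗ
      TensorProduct.map g (LinearMap.mul' R A ∘ₗ TensorProduct.map φ.ofConv ψ.ofConv) ∘ₗ
        (TensorProduct.assoc R M C C).toLinearMap =
      TensorProduct.lift α.act ∘ₗ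
        TensorProduct.map (TensorProduct.lift α.act ∘ₗ TensorProduct.map g φ.ofConv) ψ.ofConv := by
    ext n c d
    simp [α.act_mul]
  ext m
  calc ρ.conv α g (φ * ψ) m
    _ = TensorProduct.lift α.act (TensorProduct.map g
          (LinearMap.mul' R A ∘ₗ TensorProduct.map φ.ofConv ψ.ofConv)
          (comul.lTensor M (ρ.coact m))) := by
      rw [← LinearMap.comp_apply (TensorProduct.map _ _), LinearMap.map_comp_lTensor]
      rfl
    _ = TensorProduct.lift α.act (TensorProduct.map
          (TensorProduct.lift α.act ∘ₗ TensorProduct.map g φ.ofConv) ψ.ofConv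
          (ρ.coact.rTensor C (ρ.coact m))) := by
      rw [← ρ.coassoc]
      exact LinearMap.congr_fun act_assoc _
    _ = ρ.conv α (ρ.conv α g φ) ψ m := by
      rw [← LinearMap.comp_apply (TensorProduct.map _ _), LinearMap.map_comp_rTensor]
      rfl

lemma comp_conv {α} {β : RightAction R B P} {f : N →ₗ[R] P} {θ : A →ₗ[R] B}
    (hf : ∀ n a, f (α.act n a) = β.act (f n) (θ a)) (g : M →ₗ[R] N)
    (φ : WithConv (C →ₗ[R] A)) :
    f ∘ₗ ρ.conv α g φ = ρ.conv β (f ∘ₗ g) (toConv (θ ∘ₗ φ.ofConv)) := by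
  have lift_comp : f ∘ₗ TensorProduct.lift α.act ∘ₗ TensorProduct.map g φ.ofConv =
      TensorProduct.lift β.act ∘ₗ TensorProduct.map (f ∘ₗ g) (θ ∘ₗ φ.ofConv) := by
    ext m c
    simp [hf]
  ext m
  exact LinearMap.congr_fun lift_comp (ρ.coact m)

end RightCoaction

section Antipode

variable {R H A : Type*} [CommSemiring R] [Semiring H] [HopfAlgebra R H] [Semiring A] [Algebra R A]

local notation "ι₁" => AlgHom.toLinearMap (includeLeft (R := R) (S := R) (A := H) (B := H))
local notation "ι₂" => AlgHom.toLinearMap (includeRight (R := R) (A := H) (B := H))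

lemma toConv_algHom_mul_comp_antipode (j : H →ₐ[R] A) :
    toConv j.toLinearMap * toConv (j.toLinearMap ∘ₗ antipode R) = 1 := by
  ext h
  rw [(ℛ R h).convMul_apply]
  simp [← map_mul, ← map_sum, sum_mul_antipode_eq_algebraMap_counit (ℛ R h)]

lemma toConv_comp_antipode_mul_algHom (j : H →ₐ[R] A) :
    toConv (j.toLinearMap ∘ₗ antipode R) * toConv j.toLinearMap = 1 := by
  ext h
  rw [(ℛ R h).convMul_apply]
  simp [← map_mul, ← map_sum, sum_antipode_mul_eq_algebraMap_counit (ℛ R h)]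

lemma toConv_includeLeft_mul_includeRight :
    toConv ι₁ * toConv ι₂ = toConv (comul (R := R) (A := H)) := by
  ext h
  rw [(ℛ R h).convMul_apply]
  simp [(ℛ R h).eq]

-- Uniqueness of inverses in the convolution algebra replaces the anti-comultiplicativity of `S`,
-- here and in the next lemma: `Δ = ι₁ * ι₂`, and `j ∘ S` is inverse to `j` for any algebra map `j`.
lemma toConv_includeRight_mul_comul_antipode :
    toConv ι₂ * toConv (comul ∘ₗ antipode R) = toConv (ι₁ ∘ₗ antipode R) := by
  refine (left_inv_eq_right_inv (toConv_comp_antipode_mul_algHom _) ?_).symm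
  rw [← mul_assoc, toConv_includeLeft_mul_includeRight]
  exact toConv_algHom_mul_comp_antipode (Bialgebra.comulAlgHom R H)

lemma toConv_comul_antipode_mul_includeLeft :
    toConv (comul ∘ₗ antipode R) * toConv ι₁ = toConv (ι₂ ∘ₗ antipode R) := by
  refine left_inv_eq_right_inv ?_ (toConv_algHom_mul_comp_antipode _)
  rw [mul_assoc, toConv_includeLeft_mul_includeRight]
  exact toConv_comp_antipode_mul_algHom (Bialgebra.comulAlgHom R H)

lemma sum_comul_antipode_mul_tmul_one {h : H} {ι : Type*} (r : Repr R h ι) :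
    ∑ i ∈ r.index, comul (R := R) (antipode R (r.left i)) * (r.right i ⊗ₜ[R] 1) =
      1 ⊗ₜ[R] antipode R h := by
  have apply_h := congrArg (· h) (toConv_comul_antipode_mul_includeLeft (R := R) (H := H))
  beta_reduce at apply_h
  rw [r.convMul_apply] at apply_h
  simpa using apply_h

end Antipode

/-- A right Hopf module over `H`: a right module and right comodule whose coaction is compatible
with the comultiplication of `H`. -/
structure RightHopfModule (R H M : Type*) [CommSemiring R] [Semiring H] [HopfAlgebra R H]
    [AddCommMonoid M] [Module R M] extends RightAction R H M, RightCoaction R H M where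
  coact_act (m : M) (h : H) : coact (act m h) =
    (toRightAction.tensor (.regular R H)).act (coact m) (comul h)

namespace RightHopfModule

variable {R H M : Type*} [CommSemiring R] [Semiring H] [HopfAlgebra R H] [AddCommMonoid M]
  [Module R M] (X : RightHopfModule R H M)

variable (R H M) in
/-- The trivial coaction `m ↦ m ⊗ 1`. -/
abbrev trivialCoact : M →ₗ[R] M ⊗[R] H := (TensorProduct.mk R M H).flip 1

/-- The coinvariants of a Hopf module: the elements with `m₍₀₎ ⊗ m₍₁₎ = m ⊗ 1`. -/
def coinvariants : Submodule R M :=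
  LinearMap.eqLocus X.coact (trivialCoact R H M)

variable {X} in
lemma mem_coinvariants {m : M} : m ∈ X.coinvariants ↔ X.coact m = m ⊗ₜ[R] 1 := Iff.rfl

/-- The map `m ↦ m₍₀₎ · S(m₍₁₎)`, a projection onto the coinvariants. -/
def coinvProj : M →ₗ[R] M :=
  X.conv X.toRightAction .id (toConv (antipode R))

lemma conv_trivialCoact_includeRight : X.conv (X.tensor (.regular R H)) (trivialCoact R H M)
    (toConv includeRight.toLinearMap) = X.coact := by
  have lift_eq_id : TensorProduct.lift (X.tensor (.regular R H)).act ∘ₗ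
      TensorProduct.map (trivialCoact R H M)
        includeRight.toLinearMap = .id := by
    ext m h
    simp [X.act_one]
  ext m
  exact LinearMap.congr_fun lift_eq_id (X.coact m)

lemma coinvProj_mem (m : M) : X.coinvProj m ∈ X.coinvariants := by
  suffices X.coact ∘ₗ X.coinvProj = trivialCoact R H M ∘ₗ X.coinvProj from
    LinearMap.congr_fun this m
  have one_act (n : M) (h : H) : trivialCoact R H M (X.act n h) =
      (X.tensor (.regular R H)).act (trivialCoact R H M n)
        ((includeLeft : H →ₐ[R] H ⊗[R] H).toLinearMap h) := by
    simp
  calc X.coact ∘ₗ X.coinvProj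
    _ = X.conv (X.tensor (.regular R H)) X.coact (toConv (comul ∘ₗ antipode R)) :=
      X.comp_conv X.coact_act _ _
    _ = X.conv (X.tensor (.regular R H)) (trivialCoact R H M)
          (toConv (includeLeft.toLinearMap ∘ₗ antipode R)) := by
      rw [← toConv_includeRight_mul_comul_antipode, X.conv_mul, conv_trivialCoact_includeRight]
    _ = trivialCoact R H M ∘ₗ X.coinvProj := by
      rw [coinvProj, X.comp_conv one_act, LinearMap.comp_id]

lemma conv_coinvProj_id : X.conv X.toRightAction X.coinvProj (toConv .id) = .id := by
  rw [coinvProj, ← X.conv_mul, LinearMap.antipode_mul_id, X.conv_one]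

variable {X} in
lemma coact_act_of_mem {m : M} (hm : m ∈ X.coinvariants) (h : H) :
    X.coact (X.act m h) = (X.act m).rTensor H (comul h) := by
  rw [X.coact_act, mem_coinvariants.1 hm]
  generalize (comul h : H ⊗[R] H) = t
  induction t with
  | zero => simp
  | tmul a b => simp
  | add s t hs ht => simp only [map_add, hs, ht]

variable {X} in
lemma coinvProj_act_of_mem {m : M} (hm : m ∈ X.coinvariants) (h : H) :
    X.coinvProj (X.act m h) = counit (R := R) h • m := by
  have act_assoc : TensorProduct.lift X.act ∘ₗ TensorProduct.map .id (antipode R) ∘ₗ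
      (X.act m).rTensor H = X.act m ∘ₗ LinearMap.mul' R H ∘ₗ (antipode R).lTensor H := by
    ext a b
    simp [X.act_mul]
  calc X.coinvProj (X.act m h)
    _ = TensorProduct.lift X.act (TensorProduct.map .id (antipode R) (X.coact (X.act m h))) := rfl
    _ = X.act m (LinearMap.mul' R H ((antipode R).lTensor H (comul h))) := by
      rw [coact_act_of_mem hm]
      exact LinearMap.congr_fun act_assoc (comul h)
    _ = counit (R := R) h • m := by
      rw [mul_antipode_lTensor_comul_apply, Algebra.algebraMap_eq_smul_one, map_smul, X.act_one]

lemma map_coinvProj_coact_act (m : X.coinvariants) (h : H) :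
    TensorProduct.map (X.coinvProj.codRestrict _ X.coinvProj_mem) .id (X.coact (X.act m h)) =
      m ⊗ₜ[R] h := by
  have coinvProj_comp_act : X.coinvProj.codRestrict _ X.coinvProj_mem ∘ₗ X.act m =
      LinearMap.toSpanSingleton R _ m ∘ₗ counit := by
    ext k
    simp [coinvProj_act_of_mem m.2]
  rw [coact_act_of_mem m.2, ← LinearMap.comp_apply, LinearMap.map_comp_rTensor, coinvProj_comp_act,
    ← LinearMap.map_comp_rTensor, LinearMap.comp_apply, rTensor_counit_comul,
    TensorProduct.map_tmul, LinearMap.toSpanSingleton_apply_one, LinearMap.id_apply]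

lemma lift_act_map_coinvProj_coact (m : M) :
    TensorProduct.lift (X.act ∘ₗ X.coinvariants.subtype)
      (TensorProduct.map (X.coinvProj.codRestrict _ X.coinvProj_mem) .id (X.coact m)) = m := by
  have lift_comp_map : TensorProduct.lift (X.act ∘ₗ X.coinvariants.subtype) ∘ₗ
      TensorProduct.map (X.coinvProj.codRestrict _ X.coinvProj_mem) .id =
      TensorProduct.lift X.act ∘ₗ TensorProduct.map X.coinvProj .id := by
    ext n h
    simp
  exact (LinearMap.congr_fun lift_comp_map (X.coact m)).trans
    (LinearMap.congr_fun X.conv_coinvProj_id m)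

/-- The **fundamental theorem of Hopf modules**: a Hopf module `M` is freely generated by its
coinvariants, through `m ⊗ h ↦ m · h`. -/
def coinvariantsTensorEquiv : X.coinvariants ⊗[R] H ≃ₗ[R] M :=
  .ofLinearMap (TensorProduct.lift (X.act ∘ₗ X.coinvariants.subtype))
    (TensorProduct.map (X.coinvProj.codRestrict _ X.coinvProj_mem) .id ∘ₗ X.coact)
    (LinearMap.ext X.lift_act_map_coinvProj_coact)
    (TensorProduct.ext' X.map_coinvProj_coact_act)

end RightHopfModule

section Dual

open Module (Dual)

variable {R C : Type*} [CommSemiring R]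

section Coalgebra

variable [AddCommMonoid C] [Module R C] [Coalgebra R C]

/-- The left action `f ⇀ c = c₍₁₎ f(c₍₂₎)` of functionals on a coalgebra. -/
def leftHit : Dual R C →ₗ[R] C →ₗ[R] C :=
  LinearMap.lcomp R C comul ∘ₗ (TensorProduct.rid R C).toLinearMap.compRight R ∘ₗ
    LinearMap.lTensorHom C

lemma leftHit_apply (f : Dual R C) (c : C) :
    leftHit f c = TensorProduct.rid R C (f.lTensor C (comul c)) := rfl

lemma counit_leftHit (f : Dual R C) (c : C) : counit (R := R) (leftHit f c) = f c := by
  have counit_slice : counit ∘ₗ (TensorProduct.rid R C).toLinearMap ∘ₗ f.lTensor C =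
      f ∘ₗ (TensorProduct.lid R C).toLinearMap ∘ₗ counit.rTensor C := by
    ext a b
    simp [mul_comm]
  calc counit (R := R) (leftHit f c)
    _ = f (TensorProduct.lid R C (counit.rTensor C (comul c))) :=
      LinearMap.congr_fun counit_slice (comul c)
    _ = f c := by rw [rTensor_counit_comul, TensorProduct.lid_tmul, one_smul]

lemma comul_leftHit (f : Dual R C) (c : C) :
    comul (leftHit f c) = (leftHit f).lTensor C (comul (R := R) c) := by
  have comul_slice : comul ∘ₗ (TensorProduct.rid R C).toLinearMap ∘ₗ f.lTensor C =
      ((TensorProduct.rid R C).toLinearMap ∘ₗ f.lTensor C).lTensor C ∘ₗ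
        (TensorProduct.assoc R C C C).toLinearMap ∘ₗ comul.rTensor C := by
    ext a b
    simp only [TensorProduct.AlgebraTensorModule.curry_apply, LinearMap.restrictScalars_self,
      TensorProduct.curry_apply, LinearMap.comp_apply, LinearMap.rTensor_tmul,
      LinearMap.lTensor_tmul, LinearEquiv.coe_coe, TensorProduct.rid_tmul, map_smul]
    generalize (comul a : C ⊗[R] C) = t
    induction t with
    | zero => simp
    | tmul x y => simp
    | add s t hs ht => simp only [smul_add, hs, ht, TensorProduct.add_tmul, map_add]
  calc comul (leftHit f c)
    _ = ((TensorProduct.rid R C).toLinearMap ∘ₗ f.lTensor C).lTensor C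
          (TensorProduct.assoc R C C C (comul.rTensor C (comul c))) :=
      LinearMap.congr_fun comul_slice (comul c)
    _ = (leftHit f).lTensor C (comul (R := R) c) := by
      rw [coassoc_apply, ← LinearMap.lTensor_comp_apply]
      rfl

variable [Module.Finite R C] [Module.Projective R C]

/-- The coaction on the dual of a finite projective coalgebra that corresponds to `leftHit` under
`Dual R C ⊗ C ≃ (C →ₗ C)`. -/
noncomputable def dualCoact : Dual R C →ₗ[R] Dual R C ⊗[R] C :=
  (dualTensorHomEquiv R C C).symm.toLinearMap ∘ₗ leftHit

@[simp]
lemma dualTensorHom_dualCoact (f : Dual R C) : dualTensorHom R C C (dualCoact f) = leftHit f :=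
  (dualTensorHomEquiv R C C).apply_symm_apply _

lemma dualTensorHom_assoc_rTensor_dualCoact (t : Dual R C ⊗[R] C) (c : C) :
    dualTensorHom R C (C ⊗[R] C) (TensorProduct.assoc R _ C C (dualCoact.rTensor C t)) c =
      (dualTensorHom R C C t).lTensor C (comul c) := by
  induction t with
  | zero => simp
  | add s t hs ht => simp only [map_add, LinearMap.add_apply, hs, ht, LinearMap.lTensor_add]
  | tmul f x =>
    have assoc_apply (s : Dual R C ⊗[R] C) : dualTensorHom R C (C ⊗[R] C)
        (TensorProduct.assoc R _ C C (s ⊗ₜ[R] x)) c = dualTensorHom R C C s c ⊗ₜ[R] x := by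
      induction s with
      | zero => simp
      | tmul g y => simp [TensorProduct.smul_tmul']
      | add s t hs ht => simp only [TensorProduct.add_tmul, map_add, LinearMap.add_apply, hs, ht]
    have lTensor_tmul : (TensorProduct.mk R C C).flip x ∘ₗ (TensorProduct.rid R C).toLinearMap ∘ₗ
        f.lTensor C = (dualTensorHom R C C (f ⊗ₜ[R] x)).lTensor C := by
      ext a b
      simp
    rw [LinearMap.rTensor_tmul, assoc_apply, dualTensorHom_dualCoact]
    exact LinearMap.congr_fun lTensor_tmul (comul c)

/-- The dual of a finite projective coalgebra `C` as a right `C`-comodule. -/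
noncomputable def RightCoaction.dual : RightCoaction R C (Dual R C) where
  coact := dualCoact
  coassoc f := by
    apply dualTensorHom_bijective.injective
    ext c
    rw [dualTensorHom_assoc_rTensor_dualCoact, dualTensorHom_dualCoact, ← comul_leftHit,
      ← LinearMap.comp_apply (dualTensorHom _ _ _), dualTensorHom_comp_lTensor]
    simp
  lTensor_counit_coact f := by
    apply dualTensorHom_bijective.injective
    ext c
    rw [← LinearMap.comp_apply (dualTensorHom _ _ _), dualTensorHom_comp_lTensor]
    simp [counit_leftHit]

end Coalgebra

section HopfAlgebra

variable {H : Type*} [Semiring H] [HopfAlgebra R H]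

/-- The right action `(f · h)(x) = f (x * S(h))` of a Hopf algebra on its dual. -/
def RightAction.dual : RightAction R H (Dual R H) where
  act := LinearMap.lcomp R _ ((LinearMap.mul R H).flip ∘ₗ antipode R) ∘ₗ LinearMap.llcomp R H H R
  act_one f := by
    ext x
    simp
  act_mul f h k := by
    ext x
    simp [antipode_mul_antidistrib, mul_assoc]

lemma RightAction.dual_act_apply (f : Dual R H) (h x : H) :
    (RightAction.dual.act f h : Dual R H) x = f (x * antipode R h) := rfl

lemma leftHit_dual_act (f : Dual R H) (x : H) {h : H} {ι : Type*} (r : Repr R h ι) :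
    leftHit (RightAction.dual.act f h) x =
      ∑ i ∈ r.index, leftHit f (x * antipode R (r.left i)) * r.right i := by
  have slice_mul_tmul_one (t : H ⊗[R] H) (k : H) : TensorProduct.rid R H
      (f.lTensor H (t * k ⊗ₜ[R] 1)) = TensorProduct.rid R H (f.lTensor H t) * k := by
    induction t with
    | zero => simp
    | tmul a b => simp
    | add s t hs ht => simp only [add_mul, map_add, hs, ht]
  have slice_mul_one_tmul (t : H ⊗[R] H) :
      (f.lTensor H (t * 1 ⊗ₜ[R] antipode R h)) =
        (RightAction.dual.act f h : Dual R H).lTensor H t := by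
    induction t with
    | zero => simp
    | tmul a b => simp [RightAction.dual_act_apply]
    | add s t hs ht => simp only [add_mul, map_add, hs, ht]
  rw [leftHit_apply, ← slice_mul_one_tmul, ← sum_comul_antipode_mul_tmul_one r, Finset.mul_sum,
    map_sum, map_sum]
  simp only [← mul_assoc, ← Bialgebra.comul_mul, slice_mul_tmul_one, leftHit_apply]

lemma dualTensorHom_dual_tensor_act (t : Dual R H ⊗[R] H) (x a b : H) :
    dualTensorHom R H H ((RightAction.dual.tensor (.regular R H)).act t (a ⊗ₜ[R] b)) x =
      dualTensorHom R H H t (x * antipode R a) * b := by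
  induction t with
  | zero => simp
  | tmul f c => simp [RightAction.dual_act_apply]
  | add s t hs ht => simp only [map_add, LinearMap.add_apply, add_mul, hs, ht]

variable (R H) in
/-- The left integrals on a Hopf algebra: the functionals `f` with `f ⇀ h = f(h) • 1`. -/
def leftIntegrals : Submodule R (Dual R H) :=
  LinearMap.eqLocus leftHit (LinearMap.smulRightₗ.flip 1)

lemma mem_leftIntegrals {f : Dual R H} :
    f ∈ leftIntegrals R H ↔ ∀ h, leftHit f h = f h • (1 : H) :=
  LinearMap.ext_iff

variable [Module.Finite R H] [Module.Projective R H]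

/-- The dual of a finite projective Hopf algebra as a right Hopf module. -/
noncomputable def RightHopfModule.dual : RightHopfModule R H (Dual R H) where
  __ := RightAction.dual
  __ := RightCoaction.dual
  coact_act f h := by
    apply dualTensorHom_bijective.injective
    ext x
    calc dualTensorHom R H H (dualCoact (RightAction.dual.act f h)) x
      _ = ∑ i ∈ (ℛ R h).index,
            leftHit f (x * antipode R ((ℛ R h).left i)) * (ℛ R h).right i := by
        rw [dualTensorHom_dualCoact, leftHit_dual_act]
      _ = dualTensorHom R H H
            ((RightAction.dual.tensor (.regular R H)).act (dualCoact f) (comul h)) x := by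
        rw [← (ℛ R h).eq]
        simp only [map_sum, LinearMap.sum_apply, dualTensorHom_dual_tensor_act,
          dualTensorHom_dualCoact]

lemma coinvariants_dual : RightHopfModule.dual.coinvariants = leftIntegrals R H := by
  ext f
  rw [RightHopfModule.mem_coinvariants, ← dualTensorHom_bijective.injective.eq_iff]
  change dualTensorHom R H H (dualCoact f) = _ ↔ _
  rw [dualTensorHom_dualCoact]
  rfl

end HopfAlgebra

lemma finrank_leftIntegrals (R H : Type*) [CommRing R] [Nontrivial R] [Ring H] [HopfAlgebra R H]
    [Module.Free R H] [Module.Finite R H] [Module.Free R (leftIntegrals R H)] :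
    Module.finrank R (leftIntegrals R H) = 1 := by
  have : Nontrivial H := (Bialgebra.counitAlgHom R H).toRingHom.domain_nontrivial
  have finrank_pos : 0 < Module.finrank R H := Module.finrank_pos_iff_of_free R H |>.2 this
  have finrank_mul :
      Module.finrank R (leftIntegrals R H) * Module.finrank R H = Module.finrank R H := by
    rw [← Module.finrank_tensorProduct, ← coinvariants_dual,
      RightHopfModule.dual.coinvariantsTensorEquiv.finrank_eq, Module.finrank_linearMap_self]
  exact Nat.eq_of_mul_eq_mul_right finrank_pos (finrank_mul.trans (one_mul _).symm)

end Dual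

end HopfModules

theorem stmt7_general (R : Type*) [CommRing R] [IsDomain R] [IsPrincipalIdealRing R]
    (H : Type*) [Ring H] [HopfAlgebra R H] [Module.Free R H] [Module.Finite R H] :
    ∃ l₀ : H →ₗ[R] R, l₀ ≠ 0 ∧
      (∀ h : H,
        (TensorProduct.rid R H) ((TensorProduct.map LinearMap.id l₀)
          (Coalgebra.comul (R := R) h)) = l₀ h • (1 : H)) ∧
      (∀ l : H →ₗ[R] R,
        (∀ h : H,
          (TensorProduct.rid R H) ((TensorProduct.map LinearMap.id l)
            (Coalgebra.comul (R := R) h)) = l h • (1 : H)) →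
        ∃ c : R, l = c • l₀) := by
  have : Module.Free R (leftIntegrals R H) :=
    .of_basis (Submodule.basisOfPid (Module.Free.chooseBasis R (Module.Dual R H)) _).2
  obtain ⟨⟨l₀, l₀_integral⟩, l₀_ne_zero, spans⟩ :=
    (finrank_eq_one_iff' (V := leftIntegrals R H)).1 (finrank_leftIntegrals R H)
  refine ⟨l₀, Subtype.coe_ne_coe.2 l₀_ne_zero, mem_leftIntegrals.1 l₀_integral,
    fun l l_integral ↦ ?_⟩
  obtain ⟨c, smul_l₀⟩ := spans ⟨l, mem_leftIntegrals.2 l_integral⟩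
  exact ⟨c, congrArg Subtype.val smul_l₀.symm⟩

/-- For a finite-dimensional Hopf algebra `H` over a field `F`, the space
of left integrals on `H` — functionals `l : H → F` with `((id_H ⊗ l) ∘ Δ) h = l h • 1`
(identifying `H ⊗[F] F` with `H`) — is a one-dimensional subspace of the dual `H^∨`:
there is a nonzero left integral `l₀` and every left integral is a scalar multiple
of `l₀`. -/
theorem stmt7
    (F : Type) [Field F] (H : Type) [Ring H] [HopfAlgebra F H] [FiniteDimensional F H] :
    ∃ l₀ : H →ₗ[F] F, l₀ ≠ 0 ∧
      (∀ h : H,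
        (TensorProduct.rid F H) ((TensorProduct.map LinearMap.id l₀)
          (Coalgebra.comul (R := F) h)) = l₀ h • (1 : H)) ∧
      (∀ l : H →ₗ[F] F,
        (∀ h : H,
          (TensorProduct.rid F H) ((TensorProduct.map LinearMap.id l)
            (Coalgebra.comul (R := F) h)) = l h • (1 : H)) →
        ∃ c : F, l = c • l₀) :=
  stmt7_general F H
end

section
/- Let 0 → U →i V →p W → 0 be a short exact sequence of abelian groups in which U and W are free ℤ-modules of finite ranks m and n respectively (hence V is free of rank m+n). Then the assignment sending (u₁ ∧ ⋯ ∧ u_m) ⊗ (w₁ ∧ ⋯ ∧ w_n) to i(u₁) ∧ ⋯ ∧ i(u_m) ∧ v₁ ∧ ⋯ ∧ v_n ∈ Λ^{m+n} V, where each v_j ∈ V is an arbitrary preimage of w_j under p, is independent of the choice of preimages and induces a well-defined isomorphism of abelian groups Λ^m U ⊗_ℤ Λ^n W ≅ Λ^{m+n} V between the top exterior powers. -/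
open scoped TensorProduct

/-!
A basis of a free module of rank `k` identifies `Λ^k` with the scalars, a decomposable element
going to its determinant. The sequence splits because `W` is free, so bases of `U` and `W` give a
basis of `V` in which the matrix of `(i u₁, …, i u_m, v₁, …, v_n)` is block triangular. Its
diagonal blocks are the matrices of `u` and of `p ∘ v`, so its determinant is the product of
theirs. In these coordinates the assignment therefore becomes multiplication `R ⊗ R ≃ R`, which
is an isomorphism; the choice of the preimages `v_j` affects only the off-diagonal block.
-/

open Module

section TopExteriorPower

variable {R M : Type*} [CommRing R] [AddCommGroup M] [Module R M]

theorem alternatingMap_apply_eq_basis_det_smul {N ι : Type*} [AddCommGroup N] [Module R N]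
    [Fintype ι] [DecidableEq ι] (b : Basis ι R M) (f : M [⋀^ι]→ₗ[R] N) (v : ι → M) :
    f v = b.det v • f b := by
  suffices f = (LinearMap.toSpanSingleton R N (f b)).compAlternatingMap b.det from
    DFunLike.congr_fun this v
  refine Basis.ext_alternating b fun v hv ↦ ?_
  obtain ⟨σ, rfl⟩ : ∃ σ : Equiv.Perm ι, ⇑σ = v :=
    ⟨Equiv.ofBijective v (Finite.injective_iff_bijective.mp hv), rfl⟩
  change f (b ∘ σ) = b.det (b ∘ σ) • f b
  rw [f.map_perm, b.det.map_perm, b.det_self, smul_assoc, one_smul]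

/-- The isomorphism from the top exterior power of a free module to the scalars induced by the
determinant with respect to a basis `b`; it is normalised by sending the wedge of `b` to `1`. -/
noncomputable def topExteriorPowerEquiv {k : ℕ} (b : Basis (Fin k) R M) : (⋀[R]^k M) ≃ₗ[R] R :=
  LinearEquiv.ofLinearMap (exteriorPower.alternatingMapLinearEquiv b.det)
    (LinearMap.toSpanSingleton R _ (exteriorPower.ιMulti R k b))
    (by ext; simp [b.det_self])
    (by
      ext v : 2
      simp [← alternatingMap_apply_eq_basis_det_smul])

theorem topExteriorPowerEquiv_ιMulti {k : ℕ} (b : Basis (Fin k) R M) (v : Fin k → M) :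
    topExteriorPowerEquiv b (exteriorPower.ιMulti R k v) = b.det v :=
  exteriorPower.alternatingMapLinearEquiv_apply_ιMulti b.det v

end TopExteriorPower

section Exact

variable {R U V W : Type*} [CommRing R] [AddCommGroup U] [Module R U] [AddCommGroup V] [Module R V]
  [AddCommGroup W] [Module R W]

section Det

variable {ι κ : Type*} [Fintype ι] [DecidableEq ι] [Fintype κ] [DecidableEq κ]

theorem basis_prod_det_sumElim_inl (bU : Basis ι R U) (bW : Basis κ R W) (u : ι → U)
    (x : κ → U × W) :
    (bU.prod bW).det (Sum.elim (LinearMap.inl R U W ∘ u) x) =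
      bU.det u * bW.det (Prod.snd ∘ x) := by
  have toMatrix_eq : (bU.prod bW).toMatrix (Sum.elim (LinearMap.inl R U W ∘ u) x) =
      Matrix.fromBlocks (bU.toMatrix u) (bU.toMatrix (Prod.fst ∘ x)) 0
        (bW.toMatrix (Prod.snd ∘ x)) := by
    ext (j | j) (k | k) <;> simp [Basis.toMatrix_apply]
  rw [Basis.det_apply, toMatrix_eq, Matrix.det_fromBlocks_zero₂₁, ← Basis.det_apply,
    ← Basis.det_apply]

theorem exists_basis_det_sumElim_of_exact (bU : Basis ι R U) (bW : Basis κ R W) {i : U →ₗ[R] V}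
    {p : V →ₗ[R] W} (hi : Function.Injective i) (hp : Function.Surjective p)
    (hip : Function.Exact i p) :
    ∃ b : Basis (ι ⊕ κ) R V, ∀ (u : ι → U) (v : κ → V),
      b.det (Sum.elim (i ∘ u) v) = bU.det u * bW.det (p ∘ v) := by
  have : Projective R W := .of_basis bW
  have hsec : ∃ s, p ∘ₗ s = .id := projective_lifting_property p .id hp
  obtain ⟨e, rfl, rfl⟩ := ((hip.split_tfae hi hp).out 0 2).mp hsec
  refine ⟨(bU.prod bW).map e.symm, fun u v ↦ ?_⟩
  have e_comp_inl : e ∘ (e.symm ∘ₗ LinearMap.inl R U W) ∘ u = LinearMap.inl R U W ∘ u := by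
    ext1 j
    simp
  rw [Basis.det_map, LinearEquiv.symm_symm, Sum.comp_elim, e_comp_inl]
  exact basis_prod_det_sumElim_inl bU bW u (e ∘ v)

end Det

theorem exists_basis_det_append_of_exact {m n : ℕ} (bU : Basis (Fin m) R U)
    (bW : Basis (Fin n) R W) {i : U →ₗ[R] V} {p : V →ₗ[R] W} (hi : Function.Injective i)
    (hp : Function.Surjective p) (hip : Function.Exact i p) :
    ∃ b : Basis (Fin (m + n)) R V, ∀ (u : Fin m → U) (v : Fin n → V),
      b.det (Fin.append (i ∘ u) v) = bU.det u * bW.det (p ∘ v) := by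
  obtain ⟨b, hb⟩ := exists_basis_det_sumElim_of_exact bU bW hi hp hip
  refine ⟨b.reindex finSumFinEquiv, fun u v ↦ ?_⟩
  rw [Basis.det_reindex, ← hb]
  congr 1
  ext (j | k) <;> simp

theorem stmt8_general {m n : ℕ} (bU : Basis (Fin m) R U) (bW : Basis (Fin n) R W)
    {i : U →ₗ[R] V} {p : V →ₗ[R] W} (hi : Function.Injective i) (hp : Function.Surjective p)
    (hip : Function.Exact i p) :
    ∃ e : ((⋀[R]^m U) ⊗[R] (⋀[R]^n W)) ≃ₗ[R] (⋀[R]^(m + n) V),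
      ∀ (u : Fin m → U) (v : Fin n → V),
        e (exteriorPower.ιMulti R m u ⊗ₜ[R] exteriorPower.ιMulti R n (p ∘ v)) =
          exteriorPower.ιMulti R (m + n) (Fin.append (i ∘ u) v) := by
  obtain ⟨b, hb⟩ := exists_basis_det_append_of_exact bU bW hi hp hip
  refine ⟨TensorProduct.congr (topExteriorPowerEquiv bU) (topExteriorPowerEquiv bW) ≪≫ₗ
    TensorProduct.lid R R ≪≫ₗ (topExteriorPowerEquiv b).symm, fun u v ↦ ?_⟩
  rw [LinearEquiv.trans_apply, LinearEquiv.trans_apply, LinearEquiv.symm_apply_eq,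
    TensorProduct.congr_tmul, TensorProduct.lid_tmul, topExteriorPowerEquiv_ιMulti,
    topExteriorPowerEquiv_ιMulti, topExteriorPowerEquiv_ιMulti, hb, smul_eq_mul]

end Exact

/-- Let `0 → U →i V →p W → 0` be a short exact sequence of abelian groups
with `U` and `W` free `ℤ`-modules of finite ranks `m` and `n`.  Then there is a
well-defined isomorphism `Λ^m U ⊗ Λ^n W ≅ Λ^{m+n} V` sending
`(u₁ ∧ ⋯ ∧ u_m) ⊗ (p v₁ ∧ ⋯ ∧ p v_n)` to `i u₁ ∧ ⋯ ∧ i u_m ∧ v₁ ∧ ⋯ ∧ v_n`, for every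
choice of preimages `v_j ∈ V` (independence of the choice of preimages is expressed by
quantifying over all `v : Fin n → V`, since `p` is surjective). -/
theorem stmt8
    (U V W : Type) [AddCommGroup U] [Module ℤ U] [AddCommGroup V] [Module ℤ V]
    [AddCommGroup W] [Module ℤ W] (m n : ℕ)
    (hUfree : Module.Free ℤ U) (hUfin : Module.Finite ℤ U)
    (hUrank : Module.finrank ℤ U = m)
    (hWfree : Module.Free ℤ W) (hWfin : Module.Finite ℤ W)
    (hWrank : Module.finrank ℤ W = n)
    (i : U →ₗ[ℤ] V) (p : V →ₗ[ℤ] W)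
    (hi : Function.Injective i) (hp : Function.Surjective p)
    (hip : LinearMap.range i = LinearMap.ker p) :
    ∃ e : ((⋀[ℤ]^m U) ⊗[ℤ] (⋀[ℤ]^n W)) ≃ₗ[ℤ] (⋀[ℤ]^(m + n) V),
      ∀ (u : Fin m → U) (v : Fin n → V),
        e ((⟨ExteriorAlgebra.ιMulti ℤ m u,
              ExteriorAlgebra.ιMulti_range ℤ m (Set.mem_range_self u)⟩ : ⋀[ℤ]^m U) ⊗ₜ[ℤ]
            (⟨ExteriorAlgebra.ιMulti ℤ n (p ∘ v),
              ExteriorAlgebra.ιMulti_range ℤ n (Set.mem_range_self (p ∘ v))⟩ : ⋀[ℤ]^n W))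
          = (⟨ExteriorAlgebra.ιMulti ℤ (m + n) (Fin.append (i ∘ u) v),
              ExteriorAlgebra.ιMulti_range ℤ (m + n)
                (Set.mem_range_self (Fin.append (i ∘ u) v))⟩ : ⋀[ℤ]^(m + n) V) := by
  exact stmt8_general (finBasisOfFinrankEq ℤ U hUrank) (finBasisOfFinrankEq ℤ W hWrank) hi hp
    (LinearMap.exact_iff.mpr hip.symm)
end
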